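/- arXiv:1011.1292 — 5 statements merged into one kernel-verified Lean document; each statement's English description precedes it below -/
import Mathlib

section
/- Fix ε ∈ (0,1) and an integer k ≥ 1, and define β(x) = x/(log(e^e·x·k))^{2−ε} for real x ≥ 1. Let r ≥ 1 be an integer, let q_1 < q_2 < … < q_r be primes, and let p_1 < p_2 < … < p_r be the first r primes. Then for every a = (a_1,…,a_r) ∈ {0,1}^r one has β(q_1^{a_1}⋯q_r^{a_r}) · β(p_1⋯p_r) ≤ β(p_1^{a_1}⋯p_r^{a_r}) · β(q_1⋯q_r). -/
/-!
Write `L x = log (e^e · x · k) = c + log x` with `c = e + log k ≥ 2`, and `s = 2 - ε ∈ [0, 2]`.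
Split each product according to whether `a i` is `1` or `0`: `∏ q i = A * B` with `A = ∏ q i ^ a i`,
and `∏ p i = A' * B'` likewise. As the `i`-th smallest of any set of primes is at least the `i`-th
prime, `A' ≤ A` and `B' ≤ B`. With `u = log A`, `u' = log A'`, `v = log B`, `v' = log B'`, clearing
denominators leaves
`exp v' * ((c + u') * (c + u + v)) ^ s ≤ exp v * ((c + u) * (c + u' + v')) ^ s`.
This is the inequality `f (u' + v') - f u' ≤ f (u + v) - f u` for the function
`f x = x - s * log (c + x)`, which is convex and increasing on `[0, ∞)`;
it is proved directly in `exp_mul_rpow_le`.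
-/

/-- The convexity comparison for `x ↦ x - s * log (c + x)`, exponentiated and with the denominators
cleared. -/
lemma exp_mul_rpow_le {c s u u' v v' : ℝ} (hc : 2 ≤ c) (hs0 : 0 ≤ s) (hs : s ≤ 2)
    (hu' : 0 ≤ u') (hu : u' ≤ u) (hv' : 0 ≤ v') (hv : v' ≤ v) :
    Real.exp v' * ((c + u') * (c + u + v)) ^ s ≤
      Real.exp v * ((c + u) * (c + u' + v')) ^ s := by
  -- Convexity: the increment `v'` has the larger relative effect at the smaller point `c + u'`.
  have h1 : (c + u') * (c + u + v') ≤ (c + u) * (c + u' + v') := by nlinarith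
  -- Monotonicity: `c + u + v' ≥ 2`, so the remaining increment `v - v'` costs at most a
  -- factor `exp ((v - v') / 2)`, whose `s`-th power is at most `exp (v - v')`.
  have h2 : c + u + v ≤ (c + u + v') * Real.exp ((v - v') / 2) := by
    have := Real.add_one_le_exp ((v - v') / 2)
    nlinarith
  have h3 : (c + u') * (c + u + v) ≤
      ((c + u) * (c + u' + v')) * Real.exp ((v - v') / 2) := by
    calc (c + u') * (c + u + v) ≤ (c + u') * ((c + u + v') * Real.exp ((v - v') / 2)) :=
          mul_le_mul_of_nonneg_left h2 (by linarith)
      _ = ((c + u') * (c + u + v')) * Real.exp ((v - v') / 2) := by ring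
      _ ≤ _ := mul_le_mul_of_nonneg_right h1 (Real.exp_pos _).le
  have hpos : 0 ≤ (c + u) * (c + u' + v') := mul_nonneg (by linarith) (by linarith)
  have h4 : ((c + u') * (c + u + v)) ^ s ≤
      ((c + u) * (c + u' + v')) ^ s * Real.exp (v - v') := by
    calc ((c + u') * (c + u + v)) ^ s
        ≤ (((c + u) * (c + u' + v')) * Real.exp ((v - v') / 2)) ^ s :=
          Real.rpow_le_rpow (mul_nonneg (by linarith) (by linarith)) h3 hs0
      _ = ((c + u) * (c + u' + v')) ^ s * Real.exp ((v - v') / 2 * s) := by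
          rw [Real.mul_rpow hpos (Real.exp_pos _).le, ← Real.exp_mul]
      _ ≤ _ := mul_le_mul_of_nonneg_left (Real.exp_le_exp.2 (by nlinarith))
          (Real.rpow_nonneg hpos _)
  calc Real.exp v' * ((c + u') * (c + u + v)) ^ s
      ≤ Real.exp v' * (((c + u) * (c + u' + v')) ^ s * Real.exp (v - v')) :=
        mul_le_mul_of_nonneg_left h4 (Real.exp_pos _).le
    _ = (Real.exp v' * Real.exp (v - v')) * ((c + u) * (c + u' + v')) ^ s := by ring
    _ = _ := by rw [← Real.exp_add]; congr 2; ring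

lemma nth_prime_le_of_strictMono {r : ℕ} (q : Fin r → ℕ) (hq : ∀ i, (q i).Prime)
    (hqmono : StrictMono q) (i : Fin r) : Nat.nth Nat.Prime i ≤ q i := by
  -- Equivalently, at least `i` primes lie below `q i`.
  have key : ∀ n (hn : n < r), n ≤ Nat.count Nat.Prime (q ⟨n, hn⟩) := by
    intro n
    induction n with
    | zero => intro _; exact Nat.zero_le _
    | succ n ih =>
      intro hn
      have h1 := ih (by omega)
      have h2 : q ⟨n, by omega⟩ < q ⟨n + 1, hn⟩ := hqmono (by simp [Fin.lt_def])
      have h3 := Nat.count_strict_mono (hq ⟨n, by omega⟩) h2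
      omega
  calc Nat.nth Nat.Prime i ≤ Nat.nth Nat.Prime (Nat.count Nat.Prime (q i)) :=
        Nat.nth_monotone Nat.infinite_setOfPred_prime (key i i.2)
    _ = q i := Nat.nth_count (hq i)

/-- **Equation (19)** (convexity comparison) in the proof of Lemma 3.8:
with `β(x) = x/(log(e^e·x·k))^{2-ε}`, for primes `q_1 < ⋯ < q_r`, the first `r`
primes `p_1 < ⋯ < p_r`, and any `a ∈ {0,1}^r`,
`β(∏ q_i^{a_i})·β(∏ p_i) ≤ β(∏ p_i^{a_i})·β(∏ q_i)`. -/
theorem beta_convexity_comparison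
    (ε : ℝ) (hε : ε ∈ Set.Ioo (0 : ℝ) 1) (k : ℕ) (hk : 1 ≤ k)
    (β : ℝ → ℝ)
    (hβ : ∀ x : ℝ, β x = x / Real.log (Real.exp (Real.exp 1) * x * (k : ℝ)) ^ ((2 : ℝ) - ε))
    (r : ℕ) (hr : 1 ≤ r)
    (q : Fin r → ℕ) (hq : ∀ i, (q i).Prime) (hqmono : StrictMono q)
    (a : Fin r → ℕ) (ha : ∀ i, a i ≤ 1) :
    β ((∏ i : Fin r, (q i) ^ (a i) : ℕ) : ℝ) *
        β ((∏ i : Fin r, Nat.nth Nat.Prime (i : ℕ) : ℕ) : ℝ)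
      ≤ β ((∏ i : Fin r, (Nat.nth Nat.Prime (i : ℕ)) ^ (a i) : ℕ) : ℝ) *
          β ((∏ i : Fin r, q i : ℕ) : ℝ) := by
  obtain ⟨hε0, hε1⟩ := hε
  have hpq := nth_prime_le_of_strictMono q hq hqmono
  have hp : ∀ i : Fin r, 0 < Nat.nth Nat.Prime (i : ℕ) := fun i => (Nat.prime_nth_prime i).pos
  have split : ∀ f : Fin r → ℕ, ∏ i, f i = (∏ i, f i ^ a i) * ∏ i, f i ^ (1 - a i) := by
    intro f
    rw [← Finset.prod_mul_distrib]
    refine Finset.prod_congr rfl fun i _ => ?_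
    rw [← pow_add, Nat.add_sub_cancel' (ha i), pow_one]
  have prod_le : ∀ b : Fin r → ℕ,
      ∏ i : Fin r, Nat.nth Nat.Prime (i : ℕ) ^ b i ≤ ∏ i, q i ^ b i := fun b =>
    Finset.prod_le_prod' fun i _ => Nat.pow_le_pow_left (hpq i) _
  have prod_pos : ∀ b : Fin r → ℕ, 0 < ∏ i : Fin r, Nat.nth Nat.Prime (i : ℕ) ^ b i := fun b =>
    Finset.prod_pos fun i _ => pow_pos (hp i) _
  rw [split q, split fun i => Nat.nth Nat.Prime (i : ℕ)]
  have hA := prod_le a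
  have hB := prod_le fun i => 1 - a i
  have hA' := prod_pos a
  have hB' := prod_pos fun i => 1 - a i
  generalize (∏ i, q i ^ a i) = A at *
  generalize (∏ i, q i ^ (1 - a i)) = B at *
  generalize (∏ i : Fin r, Nat.nth Nat.Prime (i : ℕ) ^ a i) = A' at *
  generalize (∏ i : Fin r, Nat.nth Nat.Prime (i : ℕ) ^ (1 - a i)) = B' at *
  have hk0 : (1 : ℝ) ≤ k := by exact_mod_cast hk
  have hA1 : (1 : ℝ) ≤ A' := by exact_mod_cast hA'
  have hB1 : (1 : ℝ) ≤ B' := by exact_mod_cast hB'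
  have hAA : (A' : ℝ) ≤ A := by exact_mod_cast hA
  have hBB : (B' : ℝ) ≤ B := by exact_mod_cast hB
  have hA0 : (0 : ℝ) < A := by linarith
  have hB0 : (0 : ℝ) < B := by linarith
  have hA0' : (0 : ℝ) < A' := by linarith
  have hB0' : (0 : ℝ) < B' := by linarith
  have hlog : ∀ x : ℝ, 0 < x → Real.log (Real.exp (Real.exp 1) * x * (k : ℝ)) =
      (Real.exp 1 + Real.log k) + Real.log x := by
    intro x hx
    rw [Real.log_mul (by positivity) (by positivity), Real.log_mul (by positivity) hx.ne',
      Real.log_exp]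
    ring
  have hc : 2 ≤ Real.exp 1 + Real.log k := by
    have := Real.add_one_le_exp 1
    have := Real.log_nonneg hk0
    linarith
  have hu' := Real.log_nonneg hA1
  have hv' := Real.log_nonneg hB1
  have hu := Real.log_le_log hA0' hAA
  have hv := Real.log_le_log hB0' hBB
  have main := exp_mul_rpow_le (s := 2 - ε) hc (by linarith) (by linarith) hu' hu hv' hv
  rw [Real.exp_log hB0, Real.exp_log hB0'] at main
  push_cast
  rw [hβ, hβ, hβ, hβ, hlog _ hA0, hlog _ hA0', hlog _ (mul_pos hA0 hB0),
    hlog _ (mul_pos hA0' hB0'), Real.log_mul hA0.ne' hB0.ne', Real.log_mul hA0'.ne' hB0'.ne',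
    ← add_assoc, ← add_assoc]
  generalize Real.exp 1 + Real.log k = c at *
  generalize Real.log (A : ℝ) = u at *
  generalize Real.log (A' : ℝ) = u' at *
  generalize Real.log (B : ℝ) = v at *
  generalize Real.log (B' : ℝ) = v' at *
  have p1 : 0 < c + u := by linarith
  have p2 : 0 < c + u' := by linarith
  have p3 : 0 < c + u + v := by linarith
  have p4 : 0 < c + u' + v' := by linarith
  rw [div_mul_div_comm, div_mul_div_comm, ← Real.mul_rpow p1.le p4.le,
    ← Real.mul_rpow p2.le p3.le, div_le_div_iff₀ (by positivity) (by positivity)]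
  calc (A : ℝ) * (A' * B') * ((c + u') * (c + u + v)) ^ (2 - ε)
      = A * A' * (B' * ((c + u') * (c + u + v)) ^ (2 - ε)) := by ring
    _ ≤ A * A' * (B * ((c + u) * (c + u' + v')) ^ (2 - ε)) :=
        mul_le_mul_of_nonneg_left main (by positivity)
    _ = _ := by ring
end

section
/- Let h : ℝ → ℝ be a smooth, nonnegative function whose support is compact and contained in (0, ∞). For every positive integer A there is a constant C = C(h, A) such that for every even integer k ≥ 2, all positive integers m and n, and every real x ≥ 1: ∫_0^∞ h(x·y) · (m·n)^{k/2} · y^{k−2} · e^{−2π(m+n)y} dy ≤ C · (Γ(k−1)/(4π)^{k−1}) · √(m·n) · min(1, x·k/max(m,n))^{A}. -/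
open MeasureTheory

/-!
Since `h` is compactly supported in `(0, ∞)`, for each exponent `j` there is `D` with
`h u ≤ D * u ^ j` on `(0, ∞)` (`exists_pow_bound`). Inserting this bound turns the integral into a
Gamma integral, equal to `D * x ^ j * (m n) ^ (k / 2) * Γ(k - 1 + j) / (2π(m + n)) ^ (k - 1 + j)`.
By the arithmetic-geometric mean inequality `4π √(mn) ≤ 2π(m + n)`, and
`Γ(k - 1 + j) ≪ k ^ j Γ(k - 1)`, so this is at most a constant times
`Γ(k - 1) / (4π) ^ (k - 1) * √(mn) * (x k / max(m, n)) ^ j` (`integral_le_of_pow_bound`).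
The exponents `j = 0` and `j = A` give the two cases of the minimum. No Mellin inversion is needed:
the positivity of the integrand makes pointwise majorants of `h` sufficient.
-/

/-- A power majorant for a function supported away from `0` and `∞`: the quotient `h u / u ^ j`
is continuous on the compact support of `h`, hence bounded there. -/
lemma exists_pow_bound {h : ℝ → ℝ} (hc : Continuous h)
    (hsupp : HasCompactSupport h) (hsupp' : tsupport h ⊆ Set.Ioi 0) (j : ℕ) :
    ∃ D : ℝ, 0 < D ∧ ∀ u, 0 < u → h u ≤ D * u ^ j := by
  have hcont : ContinuousOn (fun u => h u / u ^ j) (tsupport h) :=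
    hc.continuousOn.div (continuous_pow j).continuousOn
      fun u hu => pow_ne_zero _ (ne_of_gt (hsupp' hu))
  obtain ⟨D, hD⟩ := IsCompact.exists_bound_of_continuousOn hsupp hcont
  refine ⟨max D 1, by positivity, fun u hu => ?_⟩
  by_cases hmem : u ∈ tsupport h
  · rw [← div_le_iff₀ (pow_pos hu j)]
    exact (le_abs_self _).trans ((hD u hmem).trans (le_max_left _ _))
  · rw [image_eq_zero_of_notMem_tsupport hmem]
    positivity

lemma integral_pow_mul_exp (N : ℕ) {c : ℝ} (hc : 0 < c) :
    ∫ y in Set.Ioi (0 : ℝ), y ^ N * Real.exp (-(c * y)) = N.factorial / c ^ (N + 1) := by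
  have := Real.integral_rpow_mul_exp_neg_mul_Ioi (a := (N : ℝ) + 1) (by positivity) hc
  rw [Real.Gamma_nat_eq_factorial] at this
  simp only [add_sub_cancel_right, Real.rpow_natCast] at this
  rw [this, show (N : ℝ) + 1 = ((N + 1 : ℕ) : ℝ) by push_cast; rfl, Real.rpow_natCast]
  simp [div_eq_mul_inv, mul_comm]

lemma factorial_add_le (p j : ℕ) :
    ((p + j).factorial : ℝ) ≤ p.factorial * (((j : ℝ) + 1) * ((p : ℝ) + 2)) ^ j := by
  have h1 : (p + j).factorial ≤ p.factorial * ((j + 1) * (p + 2)) ^ j := by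
    rw [← Nat.factorial_mul_ascFactorial]
    refine Nat.mul_le_mul_left _ ((Nat.ascFactorial_le_pow_add p j).trans ?_)
    exact Nat.pow_le_pow_left (by nlinarith) j
  exact_mod_cast h1

/-- The estimate obtained from a single power majorant of `h`. The weight is written `k = p + 2`,
so that `Γ(k - 1) = p!`. -/
lemma integral_le_of_pow_bound {h : ℝ → ℝ} (hnonneg : ∀ y, 0 ≤ h y) {D : ℝ} (hD : 0 < D)
    {j : ℕ} (hb : ∀ u, 0 < u → h u ≤ D * u ^ j) {p : ℕ} (hp : Even (p + 2)) {m n : ℕ}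
    (hm : 1 ≤ m) (hn : 1 ≤ n) {x : ℝ} (hx : 1 ≤ x) :
    (∫ y in Set.Ioi (0 : ℝ),
        h (x * y) * ((m : ℝ) * (n : ℝ)) ^ ((p + 2) / 2) * y ^ p *
          Real.exp (-(2 * Real.pi * ((m : ℝ) + (n : ℝ)) * y)))
      ≤ D * ((j : ℝ) + 1) ^ j * (p.factorial / (4 * Real.pi) ^ (p + 1)) *
          Real.sqrt ((m : ℝ) * (n : ℝ)) * (x * ((p : ℝ) + 2) / (max m n : ℕ)) ^ j := by
  have hm' : (1 : ℝ) ≤ m := by exact_mod_cast hm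
  have hn' : (1 : ℝ) ≤ n := by exact_mod_cast hn
  have hpi := Real.pi_gt_three
  set c : ℝ := 2 * Real.pi * ((m : ℝ) + n) with hc_def
  set s : ℝ := Real.sqrt ((m : ℝ) * n) with hs_def
  have hc : 0 < c := by positivity
  have hs : 0 < s := Real.sqrt_pos.2 (by positivity)
  have hs2 : s ^ 2 = (m : ℝ) * n := Real.sq_sqrt (by positivity)
  have hpow : ((m : ℝ) * n) ^ ((p + 2) / 2) = s ^ (p + 2) := by
    rw [← hs2, ← pow_mul, Nat.mul_div_cancel' hp.two_dvd]
  have hM : (0 : ℝ) < (max m n : ℕ) := by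
    have : 0 < max m n := by omega
    exact_mod_cast this
  have hMc : ((max m n : ℕ) : ℝ) ≤ c := by
    have : ((max m n : ℕ) : ℝ) ≤ (m : ℝ) + n := by
      have : max m n ≤ m + n := by omega
      exact_mod_cast this
    nlinarith
  have hsc : 4 * Real.pi * s ≤ c := by
    have : 2 * s ≤ (m : ℝ) + n := by
      refine abs_le_of_sq_le_sq' ?_ (by positivity) |>.2
      nlinarith [sq_nonneg ((m : ℝ) - n)]
    nlinarith
  have hval := integral_pow_mul_exp (p + j) hc
  -- A nonzero Bochner integral certifies integrability of the Gamma integrand.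
  have hint : IntegrableOn (fun y : ℝ => y ^ (p + j) * Real.exp (-(c * y))) (Set.Ioi 0) := by
    by_contra hni
    rw [integral_undef hni] at hval
    have : (0 : ℝ) < (p + j).factorial / c ^ (p + j + 1) := by positivity
    linarith
  have hmono : (∫ y in Set.Ioi (0 : ℝ),
        h (x * y) * ((m : ℝ) * (n : ℝ)) ^ ((p + 2) / 2) * y ^ p * Real.exp (-(c * y)))
      ≤ ∫ y in Set.Ioi (0 : ℝ), D * x ^ j * s ^ (p + 2) *
          (y ^ (p + j) * Real.exp (-(c * y))) := by
    refine integral_mono_of_nonneg ?_ (hint.const_mul _) ?_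
    · filter_upwards [ae_restrict_mem measurableSet_Ioi] with y hy
      have hy : 0 < y := hy
      have := hnonneg (x * y)
      simp only [Pi.zero_apply]
      positivity
    · filter_upwards [ae_restrict_mem measurableSet_Ioi] with y hy
      have hy : 0 < y := hy
      have := hb (x * y) (by positivity)
      simp only [hpow]
      calc h (x * y) * s ^ (p + 2) * y ^ p * Real.exp (-(c * y))
          ≤ (D * (x * y) ^ j) * s ^ (p + 2) * y ^ p * Real.exp (-(c * y)) := by gcongr
        _ = _ := by ring
  rw [integral_const_mul, hval] at hmono
  refine hmono.trans ?_
  -- Separate the Gamma factor, the arithmetic-geometric mean factor and the decay factor.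
  have h1 : s ^ (p + 1) / c ^ (p + 1) ≤ 1 / (4 * Real.pi) ^ (p + 1) := by
    rw [div_le_div_iff₀ (by positivity) (by positivity), one_mul, ← mul_pow, mul_comm s]
    gcongr
  have h2 : 1 / c ^ j ≤ 1 / ((max m n : ℕ) : ℝ) ^ j := by gcongr
  calc D * x ^ j * s ^ (p + 2) * ((p + j).factorial / c ^ (p + j + 1))
      = D * x ^ j * s * (p + j).factorial * (s ^ (p + 1) / c ^ (p + 1)) * (1 / c ^ j) := by
        field_simp
        ring
    _ ≤ D * x ^ j * s * (p.factorial * (((j : ℝ) + 1) * ((p : ℝ) + 2)) ^ j) *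
          (1 / (4 * Real.pi) ^ (p + 1)) * (1 / ((max m n : ℕ) : ℝ) ^ j) := by
        gcongr
        exact factorial_add_le p j
    _ = _ := by
        simp only [mul_pow, div_pow]
        ring

/-- **Lemma 3.6** (archimedean integral estimate): for `h` smooth, nonnegative,
compactly supported in `(0,∞)`, and every positive integer `A`, there is
`C = C(h,A)` such that for every even `k ≥ 2`, positive integers `m, n`, and
real `x ≥ 1`,
`∫_0^∞ h(xy)·(mn)^{k/2}·y^{k-2}·e^{-2π(m+n)y} dy
   ≤ C·(Γ(k-1)/(4π)^{k-1})·√(mn)·min(1, xk/max(m,n))^A`. -/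
theorem archimedean_integral_bound
    (h : ℝ → ℝ) (hsmooth : ContDiff ℝ (⊤ : ℕ∞) h) (hnonneg : ∀ y, 0 ≤ h y)
    (hsupp : HasCompactSupport h) (hsupp' : tsupport h ⊆ Set.Ioi 0) :
    ∀ A : ℕ, 0 < A → ∃ C : ℝ, 0 < C ∧
      ∀ k : ℕ, Even k → 2 ≤ k → ∀ m n : ℕ, 1 ≤ m → 1 ≤ n → ∀ x : ℝ, 1 ≤ x →
        (∫ y in Set.Ioi (0 : ℝ),
            h (x * y) * ((m : ℝ) * (n : ℝ)) ^ (k / 2) * y ^ (k - 2) *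
              Real.exp (-(2 * Real.pi * ((m : ℝ) + (n : ℝ)) * y)))
          ≤ C * (Real.Gamma ((k : ℝ) - 1) / (4 * Real.pi) ^ (k - 1)) *
              Real.sqrt ((m : ℝ) * (n : ℝ)) *
              min 1 (x * (k : ℝ) / (max m n : ℕ)) ^ A := by
  intro A _
  obtain ⟨D₀, hD₀, hb₀⟩ := exists_pow_bound hsmooth.continuous hsupp hsupp' 0
  obtain ⟨D, hD, hb⟩ := exists_pow_bound hsmooth.continuous hsupp hsupp' A
  refine ⟨D₀ + D * ((A : ℝ) + 1) ^ A, by positivity, ?_⟩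
  intro k hk hk2 m n hm hn x hx
  obtain ⟨p, rfl⟩ := Nat.exists_eq_add_of_le' hk2
  have hG : Real.Gamma (((p + 2 : ℕ) : ℝ) - 1) = p.factorial := by
    rw [← Real.Gamma_nat_eq_factorial]
    congr 1
    push_cast
    ring
  have e1 : p + 2 - 1 = p + 1 := rfl
  rw [hG, e1, Nat.add_sub_cancel]
  push_cast [-Nat.cast_max]
  rcases le_total 1 (x * ((p : ℝ) + 2) / (max m n : ℕ)) with ht | ht
  · rw [min_eq_left ht]
    refine (integral_le_of_pow_bound hnonneg hD₀ hb₀ hk hm hn hx).trans ?_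
    simp only [pow_zero, one_pow, mul_one]
    gcongr
    exact le_add_of_nonneg_right (by positivity)
  · rw [min_eq_right ht]
    refine (integral_le_of_pow_bound hnonneg hD hb hk hm hn hx).trans ?_
    gcongr
    exact le_add_of_nonneg_left hD₀.le
end

section
/- Let p ≥ 2 be a real number and let α be a nonzero complex number with α² ≠ 1, α ≠ p^{3/2} and α ≠ p^{−3/2}, and set β = α^{−1}. Then ((1 − p^{−1}·β/α)/(1 − β/α))·((1 + p^{−1/2}·α)/(1 − p^{−3/2}·α)) + ((1 − p^{−1}·α/β)/(1 − α/β))·((1 + p^{−1/2}·β)/(1 − p^{−3/2}·β)) = (p+1)·p^{−1}·(1 − p^{−1})·(1 + α·p^{−1/2})·(1 + β·p^{−1/2}) / ((1 − α·p^{−3/2})·(1 − β·p^{−3/2})). -/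
/-!
Put `s = p^{-1/2}`, so that `p⁻¹ = s²`, `p^{-3/2} = s³` and, with `β = α⁻¹`, every term becomes a
rational function of `s` and `α`. Over the common denominator `(α² - 1)(1 - s³α)(α - s³)` both
numerators on the left contain `(1 + sα)(α + s)`, and what remains is
`(α - s)(α - s³) - (1 - sα)(1 - s³α) = (α² - 1)(1 - s⁴)`. The factor `α² - 1` cancels, and
`1 - s⁴ = (p + 1) p⁻¹ (1 - p⁻¹)`.
-/

/-- The identity as one between rational functions in `α` and `s`, where `s` stands for
`p^{-1/2}`; the factor `1 - s⁴` stands for `(p + 1) p⁻¹ (1 - p⁻¹)`. -/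
lemma rational_identity (s α : ℂ) (hα0 : α ≠ 0) (hα1 : α ^ 2 - 1 ≠ 0)
    (h2 : 1 - s ^ 3 * α ≠ 0) (h3 : α - s ^ 3 ≠ 0) :
    ((1 - s ^ 2 * α⁻¹ / α) / (1 - α⁻¹ / α)) * ((1 + s * α) / (1 - s ^ 3 * α)) +
      ((1 - s ^ 2 * α / α⁻¹) / (1 - α / α⁻¹)) * ((1 + s * α⁻¹) / (1 - s ^ 3 * α⁻¹))
    = (1 - s ^ 4) * (1 + α * s) * (1 + α⁻¹ * s) / ((1 - α * s ^ 3) * (1 - α⁻¹ * s ^ 3)) := by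
  have e1 : (1 - s ^ 2 * α⁻¹ / α) / (1 - α⁻¹ / α) = (α ^ 2 - s ^ 2) / (α ^ 2 - 1) := by
    have : 1 - α⁻¹ / α = (α ^ 2 - 1) / α ^ 2 := by field_simp
    rw [this]
    field_simp
  have e2 : (1 - s ^ 2 * α / α⁻¹) / (1 - α / α⁻¹) = -(1 - s ^ 2 * α ^ 2) / (α ^ 2 - 1) := by
    have : 1 - α / α⁻¹ = -(α ^ 2 - 1) := by
      rw [div_inv_eq_mul]
      ring
    rw [this, div_inv_eq_mul, div_neg, neg_div]
    ring
  have e3 : 1 - s ^ 3 * α⁻¹ = (α - s ^ 3) / α := by field_simp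
  have e4 : 1 + s * α⁻¹ = (α + s) / α := by field_simp
  have h2' : 1 - α * s ^ 3 ≠ 0 := by rwa [mul_comm]
  rw [e1, e2, mul_comm α⁻¹ s, mul_comm α⁻¹ (s ^ 3), mul_comm (s ^ 3) α, e3, e4]
  field_simp
  ring


/-- The algebraic identity at the heart of **Lemma 4.3** (evaluation of the local
integral `I_p`): for real `p ≥ 2` and `α ∈ ℂ∗` with `α² ≠ 1`, `α ≠ p^{3/2}`,
`α ≠ p^{-3/2}`, and `β = α⁻¹`,
`((1-p⁻¹β/α)/(1-β/α))·((1+p^{-1/2}α)/(1-p^{-3/2}α))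
  + ((1-p⁻¹α/β)/(1-α/β))·((1+p^{-1/2}β)/(1-p^{-3/2}β))
  = (p+1)·p⁻¹·(1-p⁻¹)·(1+αp^{-1/2})(1+βp^{-1/2})/((1-αp^{-3/2})(1-βp^{-3/2}))`. -/
theorem local_integral_identity (p : ℝ) (hp : 2 ≤ p)
    (α : ℂ) (hα0 : α ≠ 0) (hα1 : α ^ 2 ≠ 1)
    (hα2 : α ≠ ((p ^ ((3 : ℝ) / 2) : ℝ) : ℂ))
    (hα3 : α ≠ ((p ^ (-(3 : ℝ) / 2) : ℝ) : ℂ))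
    (β : ℂ) (hβ : β = α⁻¹) :
    ((1 - ((p ^ (-(1 : ℝ)) : ℝ) : ℂ) * β / α) / (1 - β / α)) *
        ((1 + ((p ^ (-(1 : ℝ) / 2) : ℝ) : ℂ) * α) / (1 - ((p ^ (-(3 : ℝ) / 2) : ℝ) : ℂ) * α)) +
      ((1 - ((p ^ (-(1 : ℝ)) : ℝ) : ℂ) * α / β) / (1 - α / β)) *
        ((1 + ((p ^ (-(1 : ℝ) / 2) : ℝ) : ℂ) * β) / (1 - ((p ^ (-(3 : ℝ) / 2) : ℝ) : ℂ) * β))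
    = ((p : ℂ) + 1) * ((p ^ (-(1 : ℝ)) : ℝ) : ℂ) * (1 - ((p ^ (-(1 : ℝ)) : ℝ) : ℂ)) *
        (1 + α * ((p ^ (-(1 : ℝ) / 2) : ℝ) : ℂ)) * (1 + β * ((p ^ (-(1 : ℝ) / 2) : ℝ) : ℂ)) /
        ((1 - α * ((p ^ (-(3 : ℝ) / 2) : ℝ) : ℂ)) * (1 - β * ((p ^ (-(3 : ℝ) / 2) : ℝ) : ℂ))) := by
  have hp0 : 0 < p := by linarith
  obtain ⟨s, hs⟩ : ∃ s : ℝ, s = p ^ (-(1 : ℝ) / 2) := ⟨_, rfl⟩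
  have hs1 : p ^ (-(1 : ℝ)) = s ^ 2 := by
    rw [hs, ← Real.rpow_mul_natCast hp0.le]
    norm_num
  have hs3 : p ^ (-(3 : ℝ) / 2) = s ^ 3 := by
    rw [hs, ← Real.rpow_mul_natCast hp0.le]
    norm_num
  have hps : p * s ^ 2 = 1 := by
    rw [← hs1, Real.rpow_neg_one, mul_inv_cancel₀ hp0.ne']
  have hinv : p ^ ((3 : ℝ) / 2) * s ^ 3 = 1 := by
    rw [← hs3, ← Real.rpow_add hp0]
    norm_num
  rw [← hs, hs1, hs3, hβ]
  rw [hs3] at hα3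
  have hpsC : (p : ℂ) * (s : ℂ) ^ 2 = 1 := by exact_mod_cast hps
  have hinvC : ((p ^ ((3 : ℝ) / 2) : ℝ) : ℂ) * (s : ℂ) ^ 3 = 1 := by exact_mod_cast hinv
  push_cast at hα3 ⊢
  have h2 : 1 - (s : ℂ) ^ 3 * α ≠ 0 := by
    intro h
    apply hα2
    linear_combination -((p ^ ((3 : ℝ) / 2) : ℝ) : ℂ) * h - α * hinvC
  have hfac : ((p : ℂ) + 1) * (s : ℂ) ^ 2 * (1 - (s : ℂ) ^ 2) = 1 - (s : ℂ) ^ 4 := by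
    linear_combination (1 - (s : ℂ) ^ 2) * hpsC
  rw [hfac]
  exact rational_identity s α hα0 (sub_ne_zero.mpr hα1) h2 (sub_ne_zero.mpr hα3)
end

section
/- Let p be a prime, let ν ≥ 1 be an integer, and let λ : ℕ≥1 → ℝ be a function satisfying 0 ≤ λ(p^j) ≤ j + 1 for all integers j ≥ 0. Then ∑_{k=0}^∞ λ(p^{k+ν})/φ(p^k) ≤ 3ν + 7. -/
/-!
Since `φ(p^(m+1)) = p^m (p-1) ≥ 2^m`, the series is dominated termwise by its worst case `p = 2`,
`λ(2^j) = j + 1`. That majorant sums exactly: the term `k = 0` gives `ν + 1`, and the terms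
`k = m + 1` give `∑ (m + ν + 2) / 2^m = 2 + 2 (ν + 2)`, for a total of `3 ν + 7`.
-/

theorem two_pow_le_totient_prime_pow_succ {p : ℕ} (hp : p.Prime) (m : ℕ) :
    2 ^ m ≤ Nat.totient (p ^ (m + 1)) := by
  rw [Nat.totient_prime_pow_succ hp]
  have h2 := hp.two_le
  calc 2 ^ m ≤ p ^ m := Nat.pow_le_pow_left h2 m
    _ ≤ p ^ m * (p - 1) := Nat.le_mul_of_pos_right _ (by omega)

theorem hasSum_linear_mul_half_pow (ν : ℝ) :
    HasSum (fun m : ℕ => ((m : ℝ) + ν + 2) * (1 / 2 : ℝ) ^ m) (2 * ν + 6) := by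
  have h1 : HasSum (fun m : ℕ => (m : ℝ) * (1 / 2 : ℝ) ^ m) ((1 / 2) / (1 - 1 / 2) ^ 2) :=
    hasSum_coe_mul_geometric_of_norm_lt_one (by norm_num)
  convert h1.add (hasSum_geometric_two.mul_left (ν + 2)) using 1
  · funext m
    ring
  · ring

/-- Local Euler-factor estimate at prime powers exactly dividing the shift (used
in the proof of inequality (31) in Theorem 3.2): if `0 ≤ λ(p^j) ≤ j+1` for all
`j ≥ 0` and `ν ≥ 1`, then `∑_{k≥0} λ(p^{k+ν})/φ(p^k) ≤ 3ν + 7`. -/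
theorem local_euler_factor_shifted (p : ℕ) (hp : p.Prime) (ν : ℕ) (hν : 1 ≤ ν)
    (lam : ℕ → ℝ) (hlam : ∀ j : ℕ, 0 ≤ lam (p ^ j) ∧ lam (p ^ j) ≤ (j : ℝ) + 1) :
    Summable (fun k : ℕ => lam (p ^ (k + ν)) / (Nat.totient (p ^ k) : ℝ)) ∧
      (∑' k : ℕ, lam (p ^ (k + ν)) / (Nat.totient (p ^ k) : ℝ)) ≤ 3 * (ν : ℝ) + 7 := by
  set f : ℕ → ℝ := fun k => lam (p ^ (k + ν)) / (Nat.totient (p ^ k) : ℝ) with hf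
  have hf_nonneg (m : ℕ) : 0 ≤ f (m + 1) := div_nonneg (hlam _).1 (Nat.cast_nonneg _)
  have hf_le (m : ℕ) : f (m + 1) ≤ ((m : ℝ) + ν + 2) * (1 / 2 : ℝ) ^ m := by
    have hφ : (2 : ℝ) ^ m ≤ (Nat.totient (p ^ (m + 1)) : ℝ) := by
      exact_mod_cast two_pow_le_totient_prime_pow_succ hp m
    have hl : lam (p ^ (m + 1 + ν)) ≤ (m : ℝ) + ν + 2 := by
      have := (hlam (m + 1 + ν)).2
      push_cast at this
      linarith
    calc f (m + 1) ≤ ((m : ℝ) + ν + 2) / 2 ^ m :=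
          div_le_div₀ (by positivity) hl (by positivity) hφ
      _ = ((m : ℝ) + ν + 2) * (1 / 2 : ℝ) ^ m := by
          rw [one_div, inv_pow, div_eq_mul_inv]
  have hg := hasSum_linear_mul_half_pow (ν : ℝ)
  have htail : Summable fun m => f (m + 1) := hg.summable.of_nonneg_of_le hf_nonneg hf_le
  have hsum : Summable f := (summable_nat_add_iff 1).1 htail
  refine ⟨hsum, ?_⟩
  have hf_zero : f 0 ≤ (ν : ℝ) + 1 := by
    simpa [hf] using (hlam ν).2
  have htail_le : ∑' m, f (m + 1) ≤ 2 * (ν : ℝ) + 6 := hasSum_le hf_le htail.hasSum hg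
  rw [hsum.tsum_eq_zero_add]
  linarith
end

section
/- Let p be a prime and let λ : ℕ≥1 → ℝ be a function satisfying λ(1) = 1 and 0 ≤ λ(p^j) ≤ j + 1 for all integers j ≥ 0. Then ∑_{k=0}^∞ λ(p^k)/φ(p^k) ≤ (1 + λ(p)/p)·(1 + 20/p²). -/
/-!
Put `x = 1/p ≤ 1/2`. For `k ≥ 1` one has `1/φ(p^k) = x^k/(1-x)`, so the terms with `k ≥ 2` are
dominated by `(k+1) x^k/(1-x)`, whose sum is `x² (3-2x)/(1-x)³`. The first two terms exceed
`1 + λ(p) x` by `λ(p) x²/(1-x)`. As `x ≤ 1/2` and `λ(p) ≤ 2`, the total excess is at most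
`(16 + 4) x² = 20 x²`, and `20 x² ≤ (1 + λ(p) x) · 20 x²`.
-/

lemma inv_totient_prime_pow_succ {p : ℕ} (hp : p.Prime) (k : ℕ) :
    ((Nat.totient (p ^ (k + 1)) : ℝ))⁻¹ = (p : ℝ)⁻¹ ^ (k + 1) / (1 - (p : ℝ)⁻¹) := by
  have h1 : (1 : ℝ) < p := by exact_mod_cast hp.one_lt
  have h0 : (p : ℝ) ≠ 0 := by positivity
  have h2 : (p : ℝ) - 1 ≠ 0 := by linarith
  rw [Nat.totient_prime_pow_succ hp, Nat.cast_mul, Nat.cast_sub hp.one_le]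
  push_cast
  have h3 : 1 - (p : ℝ)⁻¹ = (p - 1) / p := by field_simp
  rw [h3, inv_pow]
  field_simp
  ring

/-- The tail of the dominating series, from exponent `2` on. -/
lemma hasSum_majorant {x : ℝ} (h0 : 0 ≤ x) (h1 : x < 1) :
    HasSum (fun k : ℕ => ((k : ℝ) + 3) * (x ^ (k + 2) / (1 - x)))
      (x ^ 2 * ((3 - 2 * x) / (1 - x) ^ 3)) := by
  have hn : ‖x‖ < 1 := by rwa [Real.norm_of_nonneg h0]
  have h := ((hasSum_coe_mul_geometric_of_norm_lt_one hn).add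
    ((hasSum_geometric_of_lt_one h0 h1).mul_left 3)).mul_right (x ^ 2 / (1 - x))
  have hx : 1 - x ≠ 0 := by linarith
  have hterm : (fun k : ℕ => ((k : ℝ) + 3) * (x ^ (k + 2) / (1 - x))) =
      fun k : ℕ => ((k : ℝ) * x ^ k + 3 * x ^ k) * (x ^ 2 / (1 - x)) := by
    funext k
    ring
  have hval : x ^ 2 * ((3 - 2 * x) / (1 - x) ^ 3) =
      (x / (1 - x) ^ 2 + 3 * (1 - x)⁻¹) * (x ^ 2 / (1 - x)) := by
    field_simp
    ring
  rw [hterm, hval]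
  exact h

theorem local_euler_factor_unshifted (p : ℕ) (hp : p.Prime)
    (lam : ℕ → ℝ) (hlam1 : lam 1 = 1)
    (hlam : ∀ j : ℕ, 0 ≤ lam (p ^ j) ∧ lam (p ^ j) ≤ (j : ℝ) + 1) :
    Summable (fun k : ℕ => lam (p ^ k) / (Nat.totient (p ^ k) : ℝ)) ∧
      (∑' k : ℕ, lam (p ^ k) / (Nat.totient (p ^ k) : ℝ))
        ≤ (1 + lam p / (p : ℝ)) * (1 + 20 / (p : ℝ) ^ 2) := by
  set f : ℕ → ℝ := fun k => lam (p ^ k) / (Nat.totient (p ^ k) : ℝ) with hf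
  set x : ℝ := (p : ℝ)⁻¹ with hx
  have hp2 : (2 : ℝ) ≤ p := by exact_mod_cast hp.two_le
  have hx0 : 0 ≤ x := by positivity
  have hx2 : x ≤ 1 / 2 := by
    rw [hx, one_div]
    exact inv_anti₀ (by norm_num) hp2
  have hM := hasSum_majorant hx0 (by linarith)
  have hnn : ∀ k, 0 ≤ f (k + 2) := fun k => div_nonneg (hlam _).1 (Nat.cast_nonneg _)
  have hle : ∀ k : ℕ, f (k + 2) ≤ ((k : ℝ) + 3) * (x ^ (k + 2) / (1 - x)) := by
    intro k
    simp only [hf]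
    rw [div_eq_mul_inv, inv_totient_prime_pow_succ hp (k + 1)]
    refine mul_le_mul_of_nonneg_right ?_ (div_nonneg (by positivity) (by linarith))
    have := (hlam (k + 2)).2
    push_cast at this
    linarith
  have hs2 : Summable fun k => f (k + 2) := Summable.of_nonneg_of_le hnn hle hM.summable
  have hs : Summable f := (summable_nat_add_iff 2).1 hs2
  refine ⟨hs, ?_⟩
  have htail : ∑' k, f (k + 2) ≤ x ^ 2 * ((3 - 2 * x) / (1 - x) ^ 3) :=
    (hs2.tsum_le_tsum hle hM.summable).trans_eq hM.tsum_eq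
  have hf0 : f 0 = 1 := by simp [hf, hlam1]
  have hf1 : f 1 = lam p * (x / (1 - x)) := by
    have := inv_totient_prime_pow_succ hp 0
    simp only [zero_add, pow_one] at this
    simp only [hf, pow_one]
    rw [div_eq_mul_inv, this]
  have hl := hlam 1
  simp only [pow_one, Nat.cast_one] at hl
  rw [← hs.sum_add_tsum_nat_add 2, Finset.sum_range_succ, Finset.sum_range_one, hf0, hf1,
    div_eq_mul_inv (lam p), div_eq_mul_inv 20, ← inv_pow, ← hx]
  have h1x : 0 < 1 - x := by linarith
  have hA : (3 - 2 * x) / (1 - x) ^ 3 ≤ 16 := by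
    rw [div_le_iff₀ (by positivity)]
    -- With `u = 1 - x ≥ 1/2` this is `(2u - 1)(8u² + 4u + 1) ≥ 0`.
    nlinarith [mul_nonneg (by linarith : 0 ≤ 1 - 2 * x)
      (by positivity : 0 ≤ 8 * (1 - x) ^ 2 + 4 * (1 - x) + 1)]
  have hB : lam p / (1 - x) ≤ 4 := by
    rw [div_le_iff₀ h1x]
    linarith
  have hsplit : lam p * (x / (1 - x)) = lam p * x + x ^ 2 * (lam p / (1 - x)) := by
    field_simp
    ring
  have hA' := mul_le_mul_of_nonneg_left hA (sq_nonneg x)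
  have hB' := mul_le_mul_of_nonneg_left hB (sq_nonneg x)
  have hC : 0 ≤ lam p * x * (20 * x ^ 2) := mul_nonneg (mul_nonneg hl.1 hx0) (by positivity)
  rw [hsplit]
  linarith
end
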